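/- For every permutation w ∈ S_n, the support of the Schubert polynomial 𝔖_w equals { ξ^C : C = (C_1,...,C_n), C_j ≤ D(w)_j for all j ∈ [n] }, where D(w)_j are the columns of the Rothe diagram of w and ξ^C_i = #{ j : i ∈ C_j }. -/

import Mathlib

open Finset MvPolynomial

/-- `DomLE R S`: `R` and `S` have the same cardinality and, for each `k`, the `k`-th least
element of `R` does not exceed the `k`-th least element of `S`.  The bases of the Schubert
matroid `SM_n(S)` are exactly the `B` with `DomLE B S`. -/
def DomLE {α : Type*} [LinearOrder α] (R S : Finset α) : Prop :=
  R.card = S.card ∧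
    ∀ (k : ℕ) (hR : k < (R.sort (· ≤ ·)).length) (hS : k < (S.sort (· ≤ ·)).length),
      (R.sort (· ≤ ·)).get ⟨k, hR⟩ ≤ (S.sort (· ≤ ·)).get ⟨k, hS⟩

/-- Auxiliary greedy matching count for a parenthesis word (`true` = '(', `false` = ')'),
given the current number of unmatched open parentheses. -/
def matchedPairsAux : List Bool → ℕ → ℕ
  | [], _ => 0
  | true :: rest, o => matchedPairsAux rest (o + 1)
  | false :: rest, 0 => matchedPairsAux rest 0
  | false :: rest, o + 1 => matchedPairsAux rest o + 1

/-- The number of paired `()`'s in a parenthesis word (`true` = '(', `false` = ')'). -/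
def matchedPairs (w : List Bool) : ℕ := matchedPairsAux w 0

/-- Column `j` of a diagram `D ⊆ [n]²`: the set `D_j = {i : (i,j) ∈ D}`. -/
def colSet {n : ℕ} (D : Finset (Fin n × Fin n)) (j : Fin n) : Finset (Fin n) :=
  Finset.univ.filter fun i => (i, j) ∈ D

/-- The parenthesis part of `word_{j,I}(D)`: reading rows `i` from top to bottom, record
'(' (= `true`) if `(i,j) ∉ D` and `i ∈ I`, and ')' (= `false`) if `(i,j) ∈ D` and `i ∉ I`.
(The `⋆`'s, at positions with `(i,j) ∈ D` and `i ∈ I`, play no role in the matching.) -/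
def colWord {n : ℕ} (D : Finset (Fin n × Fin n)) (j : Fin n) (I : Finset (Fin n)) :
    List Bool :=
  (List.finRange n).filterMap fun i =>
    if (i, j) ∈ D then (if i ∈ I then none else some false)
    else (if i ∈ I then some true else none)

/-- `θ_D^j(I)`: the number of paired `()`'s plus the number of `⋆`'s in `word_{j,I}(D)`. -/
def thetaCol {n : ℕ} (D : Finset (Fin n × Fin n)) (j : Fin n) (I : Finset (Fin n)) : ℕ :=
  matchedPairs (colWord D j I) + (colSet D j ∩ I).card

/-- `θ_D(I) = Σ_{j=1}^n θ_D^j(I)`. -/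
def theta {n : ℕ} (D : Finset (Fin n × Fin n)) (I : Finset (Fin n)) : ℕ :=
  ∑ j : Fin n, thetaCol D j I

/-- The Rothe diagram `D(w) = {(i,j) : w(i) > j, w⁻¹(j) > i}` of a permutation `w ∈ S_n`. -/
def rothe {n : ℕ} (w : Equiv.Perm (Fin n)) : Finset (Fin n × Fin n) :=
  Finset.univ.filter fun p => p.2 < w p.1 ∧ p.1 < w⁻¹ p.2

/-! The exponent vectors `ξ^C` and the coefficients of the Schubert polynomials obey the same
recursion. Let `i` be the position of the last nonzero entry of `d ≠ 0`. If `i = n`, then `x^d` does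
not occur and `d` is no `ξ^C`. Otherwise `d_{i+1} = 0`. When `w(i) < w(i+1)`, `𝔖_w` is symmetric in
`x_i, x_{i+1}`, so that `[x^d] 𝔖_w = [x^{s_i d}] 𝔖_w`. When `w(i) > w(i+1)`, comparing the
coefficients of `x^d` in `(x_i - x_{i+1}) 𝔖_{w s_i} = 𝔖_w - s_i 𝔖_w` gives
`[x^d] 𝔖_w = [x^{s_i d}] 𝔖_w + [x^{d - e_i}] 𝔖_{w s_i}`, where `e_i` is the unit vector. Hence all
coefficients are natural multiples of the constant `𝔖_1`, and nothing cancels.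

On the side of the diagrams, the only difficulty is a descent `w(i) > w(i+1)` for which some `C_j`
contains `i` and cannot have it replaced by `i + 1`, while `C_c` with `c = w(i+1)` does not contain
`i`. An exchange between the bases `C_j` and `C_c` of two Schubert matroids then puts `i` into
`C_c`, from where it can be removed. -/

section Dominance

variable {α : Type*} [LinearOrder α] {R S A A' B B' : Finset α} {x y a b i : α}

/-- The number of elements of `S` that are at most `a`; the counting form of `DomLE` is stated
with it. -/
def countLE (S : Finset α) (a : α) : ℕ := #{x ∈ S | x ≤ a}

theorem countLE_le_card (S : Finset α) (a : α) : countLE S a ≤ #S := card_filter_le _ _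

theorem countLE_mono_left (h : R ⊆ S) (a : α) : countLE R a ≤ countLE S a :=
  card_le_card (filter_subset_filter _ h)

theorem countLE_eq_card (h : ∀ x ∈ S, x ≤ a) : countLE S a = #S := by
  rw [countLE, filter_true_of_mem h]

theorem countLE_insert (hx : x ∉ S) (a : α) :
    countLE (insert x S) a = countLE S a + if x ≤ a then 1 else 0 := by
  unfold countLE
  rw [filter_insert]
  split_ifs
  · exact card_insert_of_notMem (by simp [hx])
  · rfl

theorem countLE_erase_add (hx : x ∈ S) (a : α) :
    (countLE (S.erase x) a + if x ≤ a then 1 else 0) = countLE S a := by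
  rw [← countLE_insert (notMem_erase x S), insert_erase hx]

theorem countLE_insert_erase (hx : x ∈ S) (hy : y ∉ S) (a : α) :
    (countLE (insert y (S.erase x)) a + if x ≤ a then 1 else 0) =
      countLE S a + if y ≤ a then 1 else 0 := by
  rw [countLE_insert (by simp [hy]), ← countLE_erase_add hx a]
  omega

theorem card_insert_erase_of_mem_of_notMem (hx : x ∈ S) (hy : y ∉ S) :
    #(insert y (S.erase x)) = #S := by
  rw [card_insert_of_notMem (by simp [hy]), card_erase_add_one hx]

theorem countLE_of_covBy (h : x ⋖ y) (S : Finset α) :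
    countLE S y = countLE S x + if y ∈ S then 1 else 0 := by
  have hle {z : α} (hz : z ≠ y) : z ≤ y ↔ z ≤ x :=
    ⟨fun hzy => h.le_of_lt (lt_of_le_of_ne hzy hz), fun hzx => hzx.trans h.le⟩
  have hcount {T : Finset α} (hT : y ∉ T) : countLE T y = countLE T x :=
    congrArg card (filter_congr fun z hz => hle (ne_of_mem_of_not_mem hz hT))
  split_ifs with hy
  · simp [← countLE_erase_add hy, hcount (notMem_erase y S), h.lt.not_ge]
  · simpa using hcount hy

theorem countLE_add_countLE_le (hab : a ≤ b) (h : ∀ z ∈ R, a < z → z ≤ b → z ∈ S) :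
    countLE R b + countLE S a ≤ countLE S b + countLE R a := by
  have split (T : Finset α) : countLE T b = countLE T a + #{z ∈ T | a < z ∧ z ≤ b} := by
    unfold countLE
    rw [← card_union_of_disjoint (disjoint_filter.mpr fun z _ hz hz' => hz'.1.not_ge hz),
      ← filter_or]
    exact congrArg card (filter_congr fun z _ => by grind)
  have hsub : #{z ∈ R | a < z ∧ z ≤ b} ≤ #{z ∈ S | a < z ∧ z ≤ b} :=
    card_le_card fun z hz => by
      simp only [mem_filter] at hz ⊢
      exact ⟨h z hz.1 hz.2.1 hz.2.2, hz.2⟩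
  rw [split R, split S]
  omega

theorem lt_countLE_iff_orderEmbOfFin_le (S : Finset α) (k : Fin #S) :
    (k : ℕ) < countLE S a ↔ S.orderEmbOfFin rfl k ≤ a := by
  have hcard : countLE S a = #{q : Fin #S | S.orderEmbOfFin rfl q ≤ a} := by
    rw [countLE]
    conv_lhs => rw [← S.map_orderEmbOfFin_univ rfl, filter_map, card_map]
    rfl
  rw [hcard]
  exact Tuple.lt_card_le_iff_apply_le_of_monotone (S.orderEmbOfFin rfl).monotone

theorem lt_countLE_iff_sort_get_le (k : ℕ) (hk : k < (S.sort (· ≤ ·)).length) :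
    k < countLE S a ↔ (S.sort (· ≤ ·)).get ⟨k, hk⟩ ≤ a := by
  have := lt_countLE_iff_orderEmbOfFin_le (a := a) S ⟨k, by simpa using hk⟩
  rwa [orderEmbOfFin_apply] at this

theorem domLE_iff_countLE : DomLE R S ↔ #R = #S ∧ ∀ a, countLE S a ≤ countLE R a := by
  refine and_congr_right fun hcard => ⟨fun h a => ?_, fun h k hR hS => ?_⟩
  · by_contra! hlt
    have hS : countLE R a < #S := hlt.trans_le (countLE_le_card S a)
    have hget := h (countLE R a) (by simpa [hcard] using hS) (by simpa using hS)
    exact lt_irrefl _ ((lt_countLE_iff_sort_get_le _ _).mpr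
      (hget.trans ((lt_countLE_iff_sort_get_le _ _).mp hlt)))
  · exact (lt_countLE_iff_sort_get_le k hR).mp
      (((lt_countLE_iff_sort_get_le k hS).mpr le_rfl).trans_le (h _))

namespace DomLE

theorem card_eq (h : DomLE R S) : #R = #S := h.1

theorem countLE_le (h : DomLE R S) (a : α) : countLE S a ≤ countLE R a :=
  (domLE_iff_countLE.mp h).2 a

theorem exists_le (h : DomLE R S) (hx : x ∈ R) : ∃ y ∈ S, x ≤ y := by
  obtain ⟨⟨k, hR⟩, rfl⟩ := List.get_of_mem ((mem_sort (· ≤ ·)).mpr hx)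
  have hS : k < (S.sort (· ≤ ·)).length := by simpa [h.card_eq] using hR
  exact ⟨_, (mem_sort (· ≤ ·)).mp (List.get_mem _ ⟨k, hS⟩), h.2 k hR hS⟩

theorem countLE_lt_of_mem_of_notMem (h : DomLE R S) (hR : x ∈ R) (hS : x ∉ S) :
    countLE S x < countLE R x := by
  rcases ({z ∈ S | z ≤ x} : Finset α).eq_empty_or_nonempty with hempty | hne
  · rw [countLE, hempty, card_empty]
    exact card_pos.mpr ⟨x, by simp [hR]⟩
  · obtain ⟨m, hm, hmax⟩ := exists_max_image _ id hne
    rw [mem_filter] at hm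
    have hmx : m < x := lt_of_le_of_ne hm.2 (ne_of_mem_of_not_mem hm.1 hS)
    have hSm : countLE S x ≤ countLE S m := card_le_card fun z hz =>
      mem_filter.mpr ⟨(mem_filter.mp hz).1, hmax z hz⟩
    have hRm : countLE (R.erase x) m ≤ countLE (R.erase x) x :=
      card_le_card (monotone_filter_right _ fun z _ hz => hz.trans hmx.le)
    have hRx := countLE_erase_add hR x
    have hRm' := countLE_erase_add hR m
    have := h.countLE_le m
    simp only [le_refl, if_true, hmx.not_ge, if_false] at hRx hRm'
    omega

theorem countLE_lt_of_covBy (h : DomLE R S) (hxy : x ⋖ y) (hR : y ∉ R) (hS : y ∈ S) :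
    countLE S x < countLE R x := by
  have := h.countLE_le y
  simp only [countLE_of_covBy hxy, hR, hS, if_true, if_false] at this
  omega

theorem insert_erase_of_lt (h : DomLE R S) (hx : x ∈ R) (hy : y ∉ R) (hyx : y < x) :
    DomLE (insert y (R.erase x)) S := by
  refine domLE_iff_countLE.mpr
    ⟨(card_insert_erase_of_mem_of_notMem hx hy).trans h.card_eq, fun a => ?_⟩
  have hmove := countLE_insert_erase hx hy a
  have := h.countLE_le a
  have : x ≤ a → y ≤ a := hyx.le.trans
  split_ifs at hmove <;> first | omega | tauto

theorem insert_erase_of_countLE_lt (h : DomLE R S) (hx : x ∈ R) (hy : y ∉ R)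
    (hslack : ∀ a, x ≤ a → a < y → countLE S a < countLE R a) :
    DomLE (insert y (R.erase x)) S := by
  refine domLE_iff_countLE.mpr
    ⟨(card_insert_erase_of_mem_of_notMem hx hy).trans h.card_eq, fun a => ?_⟩
  have hmove := countLE_insert_erase hx hy a
  have := h.countLE_le a
  have := hslack a
  rw [← not_le] at this
  split_ifs at hmove <;> first | omega | (have := this ‹_› ‹_›; omega)

end DomLE

theorem domLE_insert_insert_iff (hR : x ∉ R) (hS : x ∉ S) :
    DomLE (insert x R) (insert x S) ↔ DomLE R S := by
  simp only [domLE_iff_countLE, card_insert_of_notMem hR, card_insert_of_notMem hS,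
    countLE_insert hR, countLE_insert hS, add_le_add_iff_right, Nat.add_right_cancel_iff]

@[simp]
theorem domLE_empty_right_iff : DomLE R ∅ ↔ R = ∅ := by
  refine ⟨fun h => card_eq_zero.mp h.card_eq, ?_⟩
  rintro rfl
  exact domLE_iff_countLE.mpr ⟨rfl, fun _ => le_rfl⟩

@[simp]
theorem domLE_empty_left_iff : DomLE ∅ S ↔ S = ∅ := by
  refine ⟨fun h => card_eq_zero.mp h.card_eq.symm, ?_⟩
  rintro rfl
  exact domLE_empty_right_iff.mpr rfl

-- The largest `x ∈ B \ A` works: above any `a ≥ x`, the set `B` is contained in `A`, while `A'` is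
-- contained in `B'`, and `A` dominates `A'` with equality at `i`.
theorem DomLE.exists_exchange (hA : DomLE A A') (hB : DomLE B B') (hiA : i ∈ A) (hiB : i ∉ B)
    (htight : countLE A i ≤ countLE A' i) (hB' : ∀ z ∈ B', z ≤ i)
    (hsub : ∀ z ∈ A', z ≤ i → z ∈ B') :
    ∃ x ∈ B, x ∉ A ∧ DomLE (insert x (A.erase i)) A' ∧ DomLE (insert i (B.erase x)) B' := by
  have hlt {z : α} (hz : z ∈ B) : z < i := by
    obtain ⟨z', hz', hzz'⟩ := hB.exists_le hz
    exact lt_of_le_of_ne (hzz'.trans (hB' z' hz')) (ne_of_mem_of_not_mem hz hiB)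
  have hBi : countLE B i = countLE B' i := by
    rw [countLE_eq_card fun z hz => (hlt hz).le, countLE_eq_card hB', hB.card_eq]
  have hAi := countLE_erase_add hiA i
  rw [if_pos le_rfl] at hAi
  have hA'B' : countLE A' i ≤ countLE B' i := card_le_card fun z hz => by
    simp only [mem_filter] at hz ⊢
    exact ⟨hsub z hz.1 hz.2, hz.2⟩
  have hne : (B \ A).Nonempty := by
    rw [sdiff_nonempty]
    intro hBA
    have := countLE_mono_left (subset_erase.mpr ⟨hBA, hiB⟩) i
    omega
  obtain ⟨x, hx, hmax⟩ := exists_max_image _ id hne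
  obtain ⟨hxB, hxA⟩ := mem_sdiff.mp hx
  refine ⟨x, hxB, hxA, hA.insert_erase_of_lt hiA hxA (hlt hxB),
    hB.insert_erase_of_countLE_lt hxB hiB fun a hxa hai => ?_⟩
  have hBA := countLE_add_countLE_le (S := A.erase i) hai.le fun z hz haz _ => by
    by_contra hzA
    have hzA' : z ∉ A := fun h => hzA (mem_erase.mpr ⟨(hlt hz).ne, h⟩)
    exact (hxa.trans_lt haz).not_ge (hmax z (mem_sdiff.mpr ⟨hz, hzA'⟩))
  have hA'B'a := countLE_add_countLE_le hai.le fun z hz _ hzi => hsub z hz hzi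
  have hAa := countLE_erase_add hiA a
  rw [if_neg hai.not_ge] at hAa
  have := hA.countLE_le a
  omega

theorem map_swap_of_mem_of_notMem (hx : x ∈ R) (hy : y ∉ R) :
    R.map (Equiv.swap x y).toEmbedding = insert y (R.erase x) := by
  rw [← coe_inj, coe_map, Equiv.coe_toEmbedding, Equiv.image_swap_of_mem_of_notMem hx hy]
  grind

theorem map_swap_of_mem_iff_mem (h : x ∈ R ↔ y ∈ R) :
    R.map (Equiv.swap x y).toEmbedding = R := by
  ext z
  rw [mem_map_equiv, Equiv.symm_swap]
  grind

namespace DomLE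

theorem map_swap_of_notMem (h : DomLE R S) (hxy : x < y) (hx : x ∉ R) :
    DomLE (R.map (Equiv.swap x y).toEmbedding) S := by
  by_cases hy : y ∈ R
  · rw [Equiv.swap_comm, map_swap_of_mem_of_notMem hy hx]
    exact h.insert_erase_of_lt hy hx hxy
  · rwa [map_swap_of_mem_iff_mem (iff_of_false hx hy)]

theorem map_swap_of_countLE_lt (h : DomLE R S) (hxy : x ⋖ y)
    (hslack : x ∈ R → y ∉ R → countLE S x < countLE R x) :
    DomLE (R.map (Equiv.swap x y).toEmbedding) S := by
  by_cases hx : x ∈ R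
  · by_cases hy : y ∈ R
    · rwa [map_swap_of_mem_iff_mem (iff_of_true hx hy)]
    · rw [map_swap_of_mem_of_notMem hx hy]
      refine h.insert_erase_of_countLE_lt hx hy fun a hxa hay => ?_
      rw [hxa.antisymm' (hxy.le_of_lt hay)]
      exact hslack hx hy
  · exact h.map_swap_of_notMem hxy.lt hx

theorem map_swap_of_imp (h : DomLE R S) (hxy : x ⋖ y) (hS : x ∈ S → y ∈ S) :
    DomLE (R.map (Equiv.swap x y).toEmbedding) S := by
  refine h.map_swap_of_countLE_lt hxy fun hx hy => ?_
  by_cases hxS : x ∈ S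
  · exact h.countLE_lt_of_covBy hxy hy (hS hxS)
  · exact h.countLE_lt_of_mem_of_notMem hx hxS

end DomLE

theorem domLE_map_swap_right_iff (hxy : x ⋖ y) (hR : y ∉ R) (hS : y ∈ S → x ∈ S) :
    DomLE R (S.map (Equiv.swap x y).toEmbedding) ↔ DomLE R S := by
  by_cases hS' : x ∈ S ∧ y ∉ S
  swap
  · rw [map_swap_of_mem_iff_mem (by tauto)]
  obtain ⟨hx, hy⟩ := hS'
  rw [map_swap_of_mem_of_notMem hx hy]
  simp only [domLE_iff_countLE, card_insert_erase_of_mem_of_notMem hx hy]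
  refine and_congr_right fun _ => ⟨fun h a => ?_, fun h a => ?_⟩
  · have hmove := countLE_insert_erase hx hy a
    have := h a
    by_cases ha : x ≤ a ∧ a < y
    · obtain rfl : a = x := ha.1.antisymm' (hxy.le_of_lt ha.2)
      have hSy := countLE_of_covBy hxy S
      have hRy := countLE_of_covBy hxy R
      have hmove' := countLE_insert_erase hx hy y
      have := h y
      simp only [hy, hR, if_false, hxy.le, le_refl, if_true] at hSy hRy hmove'
      omega
    · have : x ≤ a → y ≤ a := fun hxa => le_of_not_gt fun hay => ha ⟨hxa, hay⟩
      split_ifs at hmove <;> first | omega | tauto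
  · have hmove := countLE_insert_erase hx hy a
    have := h a
    have : y ≤ a → x ≤ a := hxy.le.trans
    split_ifs at hmove <;> first | omega | tauto

end Dominance

section DominatedFamilies

variable {ι α : Type*} [LinearOrder α]
  {C D E : ι → Finset α} {c : ι} {x y i : α} {d e : α → ℕ}

/-- The relation between the columns `D` of the Rothe diagram of `w` and those `E` of the Rothe
diagram of `w sₓ` at a descent of `w` in the consecutive positions `x ⋖ y`. The member with index
`c = w y` loses its largest element `x`, and the others are transported by the transposition. -/
structure DescentStep (D E : ι → Finset α) (x y : α) (c : ι) : Prop where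
  covBy : x ⋖ y
  eq_insert : D c = insert x (E c)
  lt_of_mem : ∀ z ∈ E c, z < x
  eq_map_swap : ∀ j ≠ c, E j = (D j).map (Equiv.swap x y).toEmbedding
  mem_of_mem : ∀ j ≠ c, y ∈ D j → x ∈ D j
  nested : ∀ j ≠ c, x ∈ D j → y ∉ D j → ∀ z ∈ D j, z ≤ x → z ∈ D c

namespace DescentStep

theorem domLE_iff (h : DescentStep D E x y c) {j : ι} (hj : j ≠ c) {R : Finset α} (hR : y ∉ R) :
    DomLE R (E j) ↔ DomLE R (D j) := by
  rw [h.eq_map_swap j hj, domLE_map_swap_right_iff h.covBy hR (h.mem_of_mem j hj)]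

theorem domLE_insert_iff (h : DescentStep D E x y c) {R : Finset α} (hR : x ∉ R) :
    DomLE (insert x R) (D c) ↔ DomLE R (E c) := by
  rw [h.eq_insert, domLE_insert_insert_iff hR fun hx => (h.lt_of_mem x hx).false]

end DescentStep

variable [Fintype ι]

/-- The row count `ξ^C` of a family `C` of subsets of `α`: the number of members containing `i`. -/
def rowCount (C : ι → Finset α) (i : α) : ℕ := #{j | i ∈ C j}

/-- The set `{ξ^C : C_j ≤ D_j for all j}` of row counts of the families dominated by `D`. -/
def dominatedVectors (D : ι → Finset α) : Set (α → ℕ) :=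
  {d | ∃ C : ι → Finset α, (∀ j, DomLE (C j) (D j)) ∧ rowCount C = d}

theorem rowCount_eq_zero_iff : rowCount C i = 0 ↔ ∀ j, i ∉ C j := by
  simp [rowCount, filter_eq_empty_iff]

theorem rowCount_map_swap (C : ι → Finset α) (x y : α) :
    rowCount (fun j => (C j).map (Equiv.swap x y).toEmbedding) =
      rowCount C ∘ Equiv.swap x y := by
  ext k
  simp [rowCount, mem_map_equiv]

theorem rowCount_update [DecidableEq ι] (C : ι → Finset α) (c : ι) (S : Finset α) (i : α) :
    (rowCount (Function.update C c S) i + if i ∈ C c then 1 else 0) =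
      rowCount C i + if i ∈ S then 1 else 0 := by
  have split (B : ι → Finset α) :
      rowCount B i = (if i ∈ B c then 1 else 0) + #{j ∈ univ.erase c | i ∈ B j} := by
    simp only [rowCount, card_filter]
    exact (add_sum_erase _ _ (mem_univ c)).symm
  have hrest : #{j ∈ univ.erase c | i ∈ Function.update C c S j} =
      #{j ∈ univ.erase c | i ∈ C j} := by
    refine congrArg card (filter_congr fun j hj => ?_)
    rw [Function.update_of_ne (ne_of_mem_erase hj)]
  rw [split, hrest, split C, Function.update_self]
  omega

theorem rowCount_update_insert [DecidableEq ι] (C : ι → Finset α) (hx : x ∉ C c) :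
    rowCount (Function.update C c (insert x (C c))) = rowCount C + Pi.single x 1 := by
  ext k
  have hk := rowCount_update C c (insert x (C c)) k
  rw [Pi.add_apply]
  rcases eq_or_ne k x with rfl | hkx
  · simpa [hx] using hk
  · simpa [hkx] using hk

theorem rowCount_update_exchange [DecidableEq ι] {j : ι} (hj : j ≠ c) (hxj : x ∈ C j)
    (hxc : x ∉ C c) (hyc : y ∈ C c) (hyj : y ∉ C j) :
    rowCount (Function.update (Function.update C j (insert y ((C j).erase x))) c
      (insert x ((C c).erase y))) = rowCount C := by
  ext k
  have hupdate_j := rowCount_update C j (insert y ((C j).erase x)) k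
  have hupdate_c := rowCount_update (Function.update C j (insert y ((C j).erase x))) c
    (insert x ((C c).erase y)) k
  rw [Function.update_of_ne hj.symm] at hupdate_c
  grind

theorem comp_swap_comp_swap (f : α → ℕ) (x y : α) :
    (f ∘ Equiv.swap x y) ∘ Equiv.swap x y = f := by
  ext; simp

theorem zero_mem_dominatedVectors_iff : 0 ∈ dominatedVectors D ↔ ∀ j, D j = ∅ := by
  simp only [dominatedVectors, Set.mem_ofPred_eq, funext_iff, Pi.zero_apply, rowCount_eq_zero_iff]
  constructor
  · rintro ⟨C, hC, hzero⟩ j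
    have hj := hC j
    rwa [eq_empty_of_forall_notMem fun i => hzero i j, domLE_empty_left_iff] at hj
  · exact fun h => ⟨D, fun j => by simp [h j], fun i j => by simp [h j]⟩

theorem eq_zero_of_mem_dominatedVectors (hd : d ∈ dominatedVectors D)
    (hi : ∀ j, ∀ x ∈ D j, x < i) : d i = 0 := by
  obtain ⟨C, hC, rfl⟩ := hd
  refine rowCount_eq_zero_iff.mpr fun j hij => ?_
  obtain ⟨x, hx, hix⟩ := (hC j).exists_le hij
  exact (hi j x hx).not_ge hix

theorem comp_swap_mem_dominatedVectors (hxy : x ⋖ y) (hD : ∀ j, x ∈ D j → y ∈ D j)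
    (hd : d ∈ dominatedVectors D) : d ∘ Equiv.swap x y ∈ dominatedVectors D := by
  obtain ⟨C, hC, rfl⟩ := hd
  exact ⟨_, fun j => (hC j).map_swap_of_imp hxy (hD j), rowCount_map_swap C x y⟩

theorem comp_swap_mem_dominatedVectors_iff (hxy : x ⋖ y) (hD : ∀ j, x ∈ D j → y ∈ D j) :
    d ∘ Equiv.swap x y ∈ dominatedVectors D ↔ d ∈ dominatedVectors D := by
  refine ⟨fun h => ?_, comp_swap_mem_dominatedVectors hxy hD⟩
  simpa only [comp_swap_comp_swap] using comp_swap_mem_dominatedVectors hxy hD h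

theorem comp_swap_mem_dominatedVectors_of_apply_eq_zero (hxy : x < y) (hx : d x = 0)
    (hd : d ∈ dominatedVectors D) : d ∘ Equiv.swap x y ∈ dominatedVectors D := by
  obtain ⟨C, hC, rfl⟩ := hd
  exact ⟨_, fun j => (hC j).map_swap_of_notMem hxy (rowCount_eq_zero_iff.mp hx j),
    rowCount_map_swap C x y⟩

namespace DescentStep

theorem add_single_mem (h : DescentStep D E x y c) (he : e y = 0)
    (hE : e ∈ dominatedVectors E) : e + Pi.single x 1 ∈ dominatedVectors D := by
  classical
  obtain ⟨C, hC, rfl⟩ := hE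
  have hy := rowCount_eq_zero_iff.mp he
  have hx : x ∉ C c := fun hx => by
    obtain ⟨z, hz, hxz⟩ := (hC c).exists_le hx
    exact (h.lt_of_mem z hz).not_ge hxz
  refine ⟨Function.update C c (insert x (C c)), fun j => ?_, rowCount_update_insert C hx⟩
  rcases eq_or_ne j c with rfl | hj
  · rw [Function.update_self]
    exact (h.domLE_insert_iff hx).mpr (hC j)
  · rw [Function.update_of_ne hj]
    exact (h.domLE_iff hj (hy j)).mp (hC j)

theorem mem_of_rowCount_eq_add_single (h : DescentStep D E x y c) (he : e y = 0)
    (hC : ∀ j, DomLE (C j) (D j)) (hCe : rowCount C = e + Pi.single x 1) (hx : x ∈ C c) :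
    e ∈ dominatedVectors E := by
  classical
  have hy : ∀ j, y ∉ C j := rowCount_eq_zero_iff.mp (by simp [hCe, he, h.covBy.ne'])
  refine ⟨Function.update C c ((C c).erase x), fun j => ?_, ?_⟩
  · rcases eq_or_ne j c with rfl | hj
    · rw [Function.update_self, ← h.domLE_insert_iff (notMem_erase x _), insert_erase hx]
      exact hC j
    · rw [Function.update_of_ne hj]
      exact (h.domLE_iff hj (hy j)).mpr (hC j)
  · have := rowCount_update_insert (Function.update C c ((C c).erase x)) (c := c) (x := x) (by simp)
    simpa [hx, hCe] using this.symm

theorem exists_family_mem (h : DescentStep D E x y c) (hC : ∀ j, DomLE (C j) (D j))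
    (hy : ∀ j, y ∉ C j) (hx : x ∉ C c) {j : ι} (hxj : x ∈ C j)
    (htight : countLE (C j) x ≤ countLE (D j) x) :
    ∃ B : ι → Finset α, (∀ k, DomLE (B k) (D k)) ∧ rowCount B = rowCount C ∧ x ∈ B c := by
  classical
  have hj : j ≠ c := fun hjc => hx (hjc ▸ hxj)
  have hxD : x ∈ D j := by
    by_contra hxD
    exact htight.not_gt ((hC j).countLE_lt_of_mem_of_notMem hxj hxD)
  have hyD : y ∉ D j := fun hyD =>
    htight.not_gt ((hC j).countLE_lt_of_covBy h.covBy (hy j) hyD)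
  have hDc : ∀ z ∈ D c, z ≤ x := by
    rw [h.eq_insert]
    exact (forall_mem_insert _ _ _).mpr ⟨le_rfl, fun z hz => (h.lt_of_mem z hz).le⟩
  obtain ⟨z, hzc, hzj, hj', hc'⟩ :=
    (hC j).exists_exchange (hC c) hxj hx htight hDc (h.nested j hj hxD hyD)
  refine ⟨Function.update (Function.update C j (insert z ((C j).erase x))) c
    (insert x ((C c).erase z)), fun k => ?_, ?_, by simp⟩
  · rcases eq_or_ne k c with rfl | hkc
    · rwa [Function.update_self]
    · rw [Function.update_of_ne hkc]
      rcases eq_or_ne k j with rfl | hkj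
      · rwa [Function.update_self]
      · rw [Function.update_of_ne hkj]
        exact hC k
  · exact rowCount_update_exchange hj hxj hx hzc hzj

theorem add_single_mem_iff (h : DescentStep D E x y c) (he : e y = 0) :
    e + Pi.single x 1 ∈ dominatedVectors D ↔
      (e + Pi.single x 1) ∘ Equiv.swap x y ∈ dominatedVectors D ∨ e ∈ dominatedVectors E := by
  have hy : (e + Pi.single x 1 : α → ℕ) y = 0 := by simp [he, h.covBy.ne']
  constructor
  · rintro ⟨C, hC, hCe⟩
    by_cases hx : x ∈ C c
    · exact .inr (h.mem_of_rowCount_eq_add_single he hC hCe hx)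
    have hyC : ∀ j, y ∉ C j := rowCount_eq_zero_iff.mp (by rw [hCe, hy])
    by_cases hslack : ∀ j, x ∈ C j → countLE (D j) x < countLE (C j) x
    · exact .inl ⟨_, fun j => (hC j).map_swap_of_countLE_lt h.covBy fun hxj _ => hslack j hxj,
        by rw [rowCount_map_swap, hCe]⟩
    push Not at hslack
    obtain ⟨j, hxj, htight⟩ := hslack
    obtain ⟨B, hB, hBC, hxB⟩ := h.exists_family_mem hC hyC hx hxj htight
    exact .inr (h.mem_of_rowCount_eq_add_single he hB (hBC.trans hCe) hxB)
  · rintro (hswap | hE)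
    · simpa only [comp_swap_comp_swap] using
        comp_swap_mem_dominatedVectors_of_apply_eq_zero h.covBy.lt (by simpa using hy) hswap
    · exact h.add_single_mem he hE

end DescentStep

end DominatedFamilies

section RotheColumns

variable {n : ℕ} {w : Equiv.Perm (Fin n)} {i j k a b : Fin n}

theorem sum_card_colSet (D : Finset (Fin n × Fin n)) : ∑ a, #(colSet D a) = #D := by
  have hfiber (a : Fin n) : #(colSet D a) = #{p ∈ D | p.2 = a} :=
    card_bij' (fun i _ => (i, a)) (fun p _ => p.1) (by simp [colSet]) (by grind [colSet])
      (by simp) (by grind)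
  rw [card_eq_sum_card_fiberwise (f := Prod.snd) (t := univ) (by simp)]
  exact sum_congr rfl fun a _ => hfiber a

theorem mem_colSet_rothe_apply : i ∈ colSet (rothe w) (w b) ↔ w b < w i ∧ i < b := by
  simp [colSet, rothe]

theorem mem_colSet_rothe_mul_swap_apply : k ∈ colSet (rothe (w * Equiv.swap i j)) (w b) ↔
    w b < w (Equiv.swap i j k) ∧ k < Equiv.swap i j b := by
  simpa using mem_colSet_rothe_apply (w := w * Equiv.swap i j) (i := k) (b := Equiv.swap i j b)

theorem mem_colSet_rothe_of_covBy_of_lt (hij : i ⋖ j) (h : w i < w j)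
    (hi : i ∈ colSet (rothe w) a) : j ∈ colSet (rothe w) a := by
  obtain ⟨b, rfl⟩ := w.surjective a
  rw [mem_colSet_rothe_apply] at hi ⊢
  refine ⟨hi.1.trans h, lt_of_le_of_ne (hij.ge_of_gt hi.2) ?_⟩
  rintro rfl
  exact h.not_gt hi.1

theorem colSet_rothe_apply_of_covBy_of_lt (hij : i ⋖ j) (h : w j < w i) :
    colSet (rothe w) (w j) = insert i (colSet (rothe (w * Equiv.swap i j)) (w j)) := by
  ext k
  have := hij.lt
  have := hij.le_of_lt (c := k)
  rw [mem_insert, mem_colSet_rothe_apply, mem_colSet_rothe_mul_swap_apply,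
    Equiv.swap_apply_right]
  grind

theorem colSet_rothe_mul_swap_of_covBy_of_lt (hij : i ⋖ j) (h : w j < w i) (ha : a ≠ w j) :
    colSet (rothe (w * Equiv.swap i j)) a =
      (colSet (rothe w) a).map (Equiv.swap i j).toEmbedding := by
  obtain ⟨b, rfl⟩ := w.surjective a
  ext k
  have := hij.lt
  have := hij.le_of_lt (c := k)
  have := hij.ge_of_gt (c := b)
  rw [mem_map_equiv, Equiv.symm_swap, mem_colSet_rothe_apply, mem_colSet_rothe_mul_swap_apply]
  grind

theorem descentStep_rothe (hij : i ⋖ j) (h : w j < w i) :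
    DescentStep (colSet (rothe w)) (colSet (rothe (w * Equiv.swap i j))) i j (w j) where
  covBy := hij
  eq_insert := colSet_rothe_apply_of_covBy_of_lt hij h
  lt_of_mem z hz := by simpa using (mem_colSet_rothe_mul_swap_apply.mp hz).2
  eq_map_swap a ha := colSet_rothe_mul_swap_of_covBy_of_lt hij h ha
  mem_of_mem a _ hj := by
    obtain ⟨b, rfl⟩ := w.surjective a
    rw [mem_colSet_rothe_apply] at hj ⊢
    exact ⟨hj.1.trans h, hij.lt.trans hj.2⟩
  nested a ha hi hj z hz hzi := by
    obtain ⟨b, rfl⟩ := w.surjective a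
    rw [mem_colSet_rothe_apply] at hi hj hz ⊢
    have hjb : j < b := lt_of_le_of_ne (hij.ge_of_gt hi.2) fun hjb => ha (hjb ▸ rfl)
    have hwjb : w j ≤ w b := le_of_not_gt fun hlt => hj ⟨hlt, hjb⟩
    exact ⟨hwjb.trans_lt hz.1, hzi.trans_lt hij.lt⟩

theorem card_rothe_eq_of_covBy_of_lt (hij : i ⋖ j) (h : w j < w i) :
    #(rothe w) = #(rothe (w * Equiv.swap i j)) + 1 := by
  have hstep := descentStep_rothe hij h
  rw [← sum_card_colSet, ← sum_card_colSet, ← add_sum_erase _ _ (mem_univ (w j)),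
    ← add_sum_erase (a := w j) _ (fun a => #(colSet (rothe (w * Equiv.swap i j)) a))
      (mem_univ _), hstep.eq_insert,
    card_insert_of_notMem fun hi => (hstep.lt_of_mem i hi).false]
  have hrest : ∑ a ∈ univ.erase (w j), #(colSet (rothe (w * Equiv.swap i j)) a) =
      ∑ a ∈ univ.erase (w j), #(colSet (rothe w) a) :=
    sum_congr rfl fun a ha => by rw [hstep.eq_map_swap a (ne_of_mem_erase ha), card_map]
  rw [hrest]
  omega

theorem card_rothe_mul_swap_of_covBy_of_lt (hij : i ⋖ j) (h : w i < w j) :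
    #(rothe (w * Equiv.swap i j)) = #(rothe w) + 1 := by
  simpa [mul_assoc] using
    card_rothe_eq_of_covBy_of_lt (w := w * Equiv.swap i j) hij (by simpa using h)

theorem card_rothe_revPerm :
    #(rothe (Fin.revPerm : Equiv.Perm (Fin n))) = ∑ a : Fin n, (n - 1 - a) := by
  rw [← sum_card_colSet]
  refine sum_congr rfl fun a _ => ?_
  have hcol : colSet (rothe Fin.revPerm) a = Iio (Fin.rev a) := by
    ext i
    obtain ⟨b, rfl⟩ := Fin.revPerm.surjective a
    rw [mem_colSet_rothe_apply]
    simp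
  rw [hcol, Fin.card_Iio, Fin.val_rev]
  omega

theorem exists_covBy_lt_of_ne_one (hw : w ≠ 1) : ∃ i j, i ⋖ j ∧ w j < w i := by
  by_contra! hasc
  have hmono : StrictMono w := (strictMono_iff_forall_covBy _).mpr fun i j hij =>
    lt_of_le_of_ne (hasc i j hij) (w.injective.ne hij.ne)
  exact hw (DFunLike.coe_injective hmono.eq_id)

theorem exists_covBy_lt_of_ne_revPerm (hw : w ≠ Fin.revPerm) : ∃ i j, i ⋖ j ∧ w i < w j := by
  have hne : Fin.revPerm * w ≠ 1 := fun h =>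
    hw (by rw [eq_inv_of_mul_eq_one_right h]; rfl)
  obtain ⟨i, j, hij, h⟩ := exists_covBy_lt_of_ne_one hne
  exact ⟨i, j, hij, by simpa using h⟩

theorem rothe_eq_empty_iff : rothe w = ∅ ↔ w = 1 := by
  constructor
  · intro h
    by_contra hw
    obtain ⟨i, j, hij, hlt⟩ := exists_covBy_lt_of_ne_one hw
    simpa [h] using card_rothe_eq_of_covBy_of_lt hij hlt
  · rintro rfl
    ext p
    simpa [rothe] using fun h => le_of_lt h

theorem perm_induction_on_ascent {P : Equiv.Perm (Fin n) → Prop} (longest : P Fin.revPerm)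
    (ascent : ∀ w i j, i ⋖ j → w i < w j → P (w * Equiv.swap i j) → P w)
    (w : Equiv.Perm (Fin n)) : P w := by
  induction hm : n * n - #(rothe w) using Nat.strong_induction_on generalizing w with
  | _ m ih =>
    by_cases hw : w = Fin.revPerm
    · exact hw ▸ longest
    obtain ⟨i, j, hij, h⟩ := exists_covBy_lt_of_ne_revPerm hw
    have hcard := card_rothe_mul_swap_of_covBy_of_lt hij h
    have hle : #(rothe (w * Equiv.swap i j)) ≤ n * n := by
      simpa using card_le_univ (rothe (w * Equiv.swap i j))
    exact ascent w i j hij h (ih _ (by omega) _ rfl)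

end RotheColumns

section DividedDifference

variable {σ R : Type*} [CommRing R] {f g p q : MvPolynomial σ R} {i j k : σ} {d e : σ →₀ ℕ}

theorem isHomogeneous_of_isHomogeneous_mul [IsDomain R] {a b : ℕ} (hp : p.IsHomogeneous a)
    (hp₀ : p ≠ 0) (hpq : (p * q).IsHomogeneous (a + b)) : q.IsHomogeneous b := by
  let _ := gradedAlgebra (σ := σ) (R := R)
  have hcomp := DirectSum.coe_decompose_mul_add_of_left_mem (homogeneousSubmodule σ R)
    (j := b) (b := q) hp
  rw [DirectSum.decompose_of_mem_same _ hpq] at hcomp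
  rw [mul_left_cancel₀ hp₀ hcomp]
  exact (DirectSum.decompose (homogeneousSubmodule σ R) q b).2

theorem X_sub_X_ne_zero [Nontrivial R] (hij : i ≠ j) : (X i - X j : MvPolynomial σ R) ≠ 0 :=
  sub_ne_zero.mpr (X_injective.ne hij)

theorem one_le_degreeOf_X_sub_X [Nontrivial R] (hij : i ≠ j) (hk : k = i ∨ k = j) :
    1 ≤ degreeOf k (X i - X j : MvPolynomial σ R) := by
  classical
  have hmem : Finsupp.single k 1 ∈ (X i - X j : MvPolynomial σ R).support := by
    rw [mem_support_iff, coeff_sub, coeff_X, coeff_X]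
    rcases hk with rfl | rfl
    · simp [Finsupp.single_left_inj, hij.symm]
    · simp [Finsupp.single_left_inj, hij]
  simpa using monomial_le_degreeOf k hmem

variable [DecidableEq σ]

theorem coe_mapDomain_swap (i j : σ) (d : σ →₀ ℕ) :
    ⇑(d.mapDomain (Equiv.swap i j)) = ⇑d ∘ Equiv.swap i j := by
  ext k
  simp [Finsupp.mapDomain_equiv_apply]

theorem coeff_rename_swap (i j : σ) (f : MvPolynomial σ R) (d : σ →₀ ℕ) :
    coeff d (rename (Equiv.swap i j) f) = coeff (d.mapDomain (Equiv.swap i j)) f := by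
  have hd : (d.mapDomain (Equiv.swap i j)).mapDomain (Equiv.swap i j) = d :=
    DFunLike.coe_injective (by ext; simp)
  rw [← coeff_rename_mapDomain _ (Equiv.swap i j).injective f, hd]

theorem degreeOf_rename_swap (i j k : σ) (f : MvPolynomial σ R) :
    degreeOf k (rename (Equiv.swap i j) f) = degreeOf (Equiv.swap i j k) f := by
  simpa using degreeOf_rename_of_injective (p := f) (Equiv.swap i j).injective (Equiv.swap i j k)

/-- `g = ∂_{i,j} f` is the divided difference of `f` in the variables `i` and `j`, with the
denominator cleared. -/
def IsDividedDifference (i j : σ) (f g : MvPolynomial σ R) : Prop :=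
  (X i - X j) * g = f - rename (Equiv.swap i j) f

namespace IsDividedDifference

theorem isHomogeneous [IsDomain R] (h : IsDividedDifference i j f g) (hij : i ≠ j) {m : ℕ}
    (hf : f.IsHomogeneous (m + 1)) : g.IsHomogeneous m := by
  refine isHomogeneous_of_isHomogeneous_mul
    ((isHomogeneous_X R i).sub (isHomogeneous_X R j)) (X_sub_X_ne_zero hij) ?_
  rw [h, add_comm]
  exact hf.sub hf.rename_isHomogeneous

theorem degreeOf_add_degreeOf_le [IsDomain R] (h : IsDividedDifference i j f g) (hij : i ≠ j)
    (hg : g ≠ 0) (k : σ) : degreeOf k (X i - X j : MvPolynomial σ R) + degreeOf k g ≤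
      max (degreeOf k f) (degreeOf (Equiv.swap i j k) f) := by
  rw [← degreeOf_mul_eq (X_sub_X_ne_zero hij) hg, h, ← degreeOf_rename_swap]
  exact degreeOf_sub_le k _ _

theorem rename_swap [IsDomain R] (h : IsDividedDifference i j f g) (hij : i ≠ j) :
    rename (Equiv.swap i j) g = g := by
  have hswap : (X j - X i) * rename (Equiv.swap i j) g = rename (Equiv.swap i j) f - f := by
    have := congrArg (rename (Equiv.swap i j)) h
    simpa [rename_rename, ← Equiv.coe_trans] using this
  refine mul_left_cancel₀ (X_sub_X_ne_zero hij) ?_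
  rw [h, ← neg_sub (X j), neg_mul, hswap, neg_sub]

theorem coeff_add_single (h : IsDividedDifference i j f g) (hij : i ≠ j) (he : e j = 0) :
    coeff (e + Finsupp.single i 1) f =
      coeff ((e + Finsupp.single i 1).mapDomain (Equiv.swap i j)) f + coeff e g := by
  have hcoeff := congrArg (coeff (e + Finsupp.single i 1)) h
  rw [sub_mul, coeff_sub, coeff_sub, coeff_rename_swap, add_comm e, coeff_X_mul, coeff_X_mul',
    if_neg (by simp [he, hij]), sub_zero] at hcoeff
  rw [add_comm e, hcoeff, add_sub_cancel]

end IsDividedDifference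

end DividedDifference

section Schubert

variable {n : ℕ} {R : Type*} [CommRing R] {S : Equiv.Perm (Fin n) → MvPolynomial (Fin n) R}
  {w : Equiv.Perm (Fin n)} {i j : Fin n} {d e : Fin n →₀ ℕ}

/-- `S` is the family of Schubert polynomials: it starts at the longest permutation and descends
along ascents by divided differences. -/
structure IsSchubertFamily (S : Equiv.Perm (Fin n) → MvPolynomial (Fin n) R) : Prop where
  longest : S Fin.revPerm = ∏ i : Fin n, X i ^ (n - 1 - (i : ℕ))
  ascent : ∀ w i j, i ⋖ j → w i < w j → IsDividedDifference i j (S (w * Equiv.swap i j)) (S w)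

theorem sum_mapDomain_swap_mul_lt (hij : i < j) (hi : d i ≠ 0) (hj : d j = 0) :
    ∑ k, d.mapDomain (Equiv.swap i j) k * (n - (k : ℕ)) < ∑ k, d k * (n - (k : ℕ)) := by
  calc ∑ k, d.mapDomain (Equiv.swap i j) k * (n - (k : ℕ))
      = ∑ k, d k * (n - (Equiv.swap i j k : ℕ)) := by
        rw [coe_mapDomain_swap, ← Equiv.sum_comp (Equiv.swap i j)]
        simp
    _ < ∑ k, d k * (n - (k : ℕ)) := by
        refine sum_lt_sum (fun k _ => ?_) ⟨i, mem_univ i, ?_⟩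
        · rcases eq_or_ne k j with rfl | hkj
          · simp [hj]
          rcases eq_or_ne k i with rfl | hki
          · rw [Equiv.swap_apply_left]
            gcongr
            exact hij.le
          · rw [Equiv.swap_apply_of_ne_of_ne hki hkj]
        · rw [Equiv.swap_apply_left]
          have := i.isLt
          have : (i : ℕ) < j := hij
          exact mul_lt_mul_of_pos_left (by omega) (Nat.pos_of_ne_zero hi)

theorem sum_mul_lt_sum_add_single_mul (e : Fin n →₀ ℕ) (i : Fin n) :
    ∑ k, e k * (n - (k : ℕ)) <
      ∑ k, (e + Finsupp.single i 1 : Fin n →₀ ℕ) k * (n - (k : ℕ)) := by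
  refine sum_lt_sum (fun k _ => Nat.mul_le_mul_right _ (by simp)) ⟨i, mem_univ i, ?_⟩
  have := i.isLt
  simp [add_mul]

-- The last nonzero exponent `d i` is either moved to the next position or lowered by one; both
-- decrease `∑ k, d k * (n - k)`.
theorem transition_induction {P : Equiv.Perm (Fin n) → (Fin n →₀ ℕ) → Prop}
    (zero : ∀ w, P w 0) (last : ∀ w d i, IsMax i → d i ≠ 0 → P w d)
    (ascent : ∀ w d i j, i ⋖ j → w i < w j → P w (d.mapDomain (Equiv.swap i j)) → P w d)
    (descent : ∀ w e i j, i ⋖ j → w j < w i → e j = 0 →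
      P w ((e + Finsupp.single i 1).mapDomain (Equiv.swap i j)) → P (w * Equiv.swap i j) e →
      P w (e + Finsupp.single i 1))
    (w : Equiv.Perm (Fin n)) (d : Fin n →₀ ℕ) : P w d := by
  induction hm : ∑ k, d k * (n - (k : ℕ)) using Nat.strong_induction_on generalizing w d with
  | _ m ih =>
    subst hm
    rcases eq_or_ne d 0 with rfl | hd
    · exact zero w
    obtain ⟨i, hi, hmax⟩ := exists_max_image d.support id (Finsupp.support_nonempty_iff.mpr hd)
    have hdi : d i ≠ 0 := Finsupp.mem_support_iff.mp hi
    by_cases hlast : IsMax i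
    · exact last w d i hlast hdi
    obtain ⟨j, hij⟩ := exists_covBy_of_wellFoundedLT hlast
    have hdj : d j = 0 := by
      by_contra hdj
      exact hij.lt.not_ge (hmax j (Finsupp.mem_support_iff.mpr hdj))
    have hswap := ih _ (sum_mapDomain_swap_mul_lt hij.lt hdi hdj) w _ rfl
    rcases lt_or_gt_of_ne (w.injective.ne hij.ne) with h | h
    · exact ascent w d i j hij h hswap
    · obtain ⟨e, rfl⟩ : ∃ e, d = e + Finsupp.single i 1 :=
        ⟨_, (Finsupp.sub_add_single_one_cancel hdi).symm⟩
      exact descent w e i j hij h (by simpa using (add_eq_zero.mp hdj).1) hswap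
        (ih _ (sum_mul_lt_sum_add_single_mul e i) _ _ rfl)

theorem prod_X_pow_eq_monomial_univ {σ : Type*} [Fintype σ] (d : σ →₀ ℕ) :
    ∏ i, X i ^ d i = (monomial d 1 : MvPolynomial σ R) := by
  rw [monomial_eq, C_1, one_mul, Finsupp.prod_fintype _ _ fun _ => pow_zero _]

theorem zero_mem_dominatedVectors_rothe_iff :
    0 ∈ dominatedVectors (colSet (rothe w)) ↔ w = 1 := by
  rw [zero_mem_dominatedVectors_iff, ← rothe_eq_empty_iff, ← card_eq_zero, ← sum_card_colSet,
    sum_eq_zero_iff]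
  simp

namespace IsSchubertFamily

theorem dividedDifference_of_descent (hS : IsSchubertFamily S) (hij : i ⋖ j) (h : w j < w i) :
    IsDividedDifference i j (S w) (S (w * Equiv.swap i j)) := by
  simpa [mul_assoc] using hS.ascent (w * Equiv.swap i j) i j hij (by simpa using h)

variable [IsDomain R]

theorem isHomogeneous (hS : IsSchubertFamily S) (w : Equiv.Perm (Fin n)) :
    (S w).IsHomogeneous #(rothe w) := by
  induction w using perm_induction_on_ascent with
  | longest =>
    rw [hS.longest, card_rothe_revPerm]
    exact IsHomogeneous.prod _ _ _ fun i _ => isHomogeneous_X_pow i _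
  | ascent w i j hij h ih =>
    rw [card_rothe_mul_swap_of_covBy_of_lt hij h] at ih
    exact (hS.ascent w i j hij h).isHomogeneous hij.ne ih

theorem degreeOf_le (hS : IsSchubertFamily S) (w : Equiv.Perm (Fin n)) (k : Fin n) :
    degreeOf k (S w) ≤ n - 1 - k := by
  induction w using perm_induction_on_ascent generalizing k with
  | longest =>
    rw [hS.longest]
    refine (degreeOf_prod_le _ _ _).trans ?_
    rw [sum_eq_single k (fun i _ hi => degreeOf_X_pow_of_ne _ hi.symm) (by simp)]
    simp
  | ascent w i j hij h ih =>
    rcases eq_or_ne (S w) 0 with hzero | hzero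
    · simp [hzero]
    have hmul := (hS.ascent w i j hij h).degreeOf_add_degreeOf_le hij.ne hzero k
    have hX : k = i ∨ k = j → _ := one_le_degreeOf_X_sub_X (R := R) hij.ne
    have hk := ih k
    have hk' := ih (Equiv.swap i j k)
    have hji : (j : ℕ) = i + 1 := (Nat.covBy_iff_add_one_eq.mp (Fin.covBy_iff.mp hij)).symm
    have := j.isLt
    rcases eq_or_ne k i with rfl | hki
    · grind
    rcases eq_or_ne k j with rfl | hkj
    · grind
    · grind

theorem coeff_mapDomain_swap (hS : IsSchubertFamily S) (hij : i ⋖ j) (h : w i < w j)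
    (d : Fin n →₀ ℕ) : coeff (d.mapDomain (Equiv.swap i j)) (S w) = coeff d (S w) := by
  rw [← coeff_rename_swap, (hS.ascent w i j hij h).rename_swap hij.ne]

theorem coeff_zero (hS : IsSchubertFamily S) (hw : w ≠ 1) : coeff 0 (S w) = 0 := by
  refine (hS.isHomogeneous w).coeff_eq_zero ?_
  rw [map_zero]
  exact (card_ne_zero.mpr (nonempty_iff_ne_empty.mpr (rothe_eq_empty_iff.not.mpr hw))).symm

theorem coeff_eq_zero_of_isMax (hS : IsSchubertFamily S) (hi : IsMax i) (hd : d i ≠ 0) :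
    coeff d (S w) = 0 := by
  by_contra hcoeff
  have hle := (monomial_le_degreeOf i (mem_support_iff.mpr hcoeff)).trans (hS.degreeOf_le w i)
  have hlast : n - 1 ≤ (i : ℕ) :=
    Fin.le_def.mp (hi.isTop ⟨n - 1, Nat.sub_one_lt_of_lt i.isLt⟩)
  omega

theorem exists_coeff_eq_mul (hS : IsSchubertFamily S) (w : Equiv.Perm (Fin n))
    (d : Fin n →₀ ℕ) : ∃ N : ℕ, coeff d (S w) = coeff 0 (S 1) * N ∧
      (N ≠ 0 ↔ ⇑d ∈ dominatedVectors (colSet (rothe w))) := by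
  induction w, d using transition_induction with
  | zero w =>
    rw [Finsupp.coe_zero, zero_mem_dominatedVectors_rothe_iff]
    rcases eq_or_ne w 1 with rfl | hw
    · exact ⟨1, by simp⟩
    · exact ⟨0, by simp [hS.coeff_zero hw, hw]⟩
  | last w d i hi hd =>
    refine ⟨0, by simp [hS.coeff_eq_zero_of_isMax hi hd], iff_of_false (by simp) fun hmem => ?_⟩
    refine hd (eq_zero_of_mem_dominatedVectors hmem fun a x hx => ?_)
    obtain ⟨b, rfl⟩ := w.surjective a
    exact (mem_colSet_rothe_apply.mp hx).2.trans_le (hi.isTop b)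
  | ascent w d i j hij h ih =>
    rwa [hS.coeff_mapDomain_swap hij h, coe_mapDomain_swap, comp_swap_mem_dominatedVectors_iff hij
      fun _ => mem_colSet_rothe_of_covBy_of_lt hij h] at ih
  | descent w e i j hij h he ihswap ihe =>
    obtain ⟨N, hN, hNmem⟩ := ihswap
    obtain ⟨M, hM, hMmem⟩ := ihe
    refine ⟨N + M, ?_, ?_⟩
    · rw [(hS.dividedDifference_of_descent hij h).coeff_add_single hij.ne he, hN, hM]
      push_cast
      ring
    · rw [coe_mapDomain_swap, Finsupp.coe_add, Finsupp.single_eq_pi_single] at hNmem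
      rw [Finsupp.coe_add, Finsupp.single_eq_pi_single,
        (descentStep_rothe hij h).add_single_mem_iff he, ← hNmem, ← hMmem]
      omega

theorem coeff_zero_one_ne_zero (hS : IsSchubertFamily S) : coeff 0 (S 1) ≠ 0 := by
  let δ : Fin n →₀ ℕ := Finsupp.equivFunOnFinite.symm fun i => n - 1 - i
  obtain ⟨N, hN, -⟩ := hS.exists_coeff_eq_mul Fin.revPerm δ
  have hδ : coeff δ (S Fin.revPerm) = 1 := by
    rw [hS.longest]
    exact (congrArg (coeff δ) (prod_X_pow_eq_monomial_univ δ)).trans (by simp)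
  rw [hδ] at hN
  exact left_ne_zero_of_mul (hN ▸ one_ne_zero)

theorem coeff_ne_zero_iff [CharZero R] (hS : IsSchubertFamily S) :
    coeff d (S w) ≠ 0 ↔ ⇑d ∈ dominatedVectors (colSet (rothe w)) := by
  obtain ⟨N, hN, hmem⟩ := hS.exists_coeff_eq_mul w d
  rw [← hmem, hN, mul_ne_zero_iff, Nat.cast_ne_zero, and_iff_right hS.coeff_zero_one_ne_zero]

end IsSchubertFamily

end Schubert

theorem stmt11_general {n : ℕ} {R : Type*} [CommRing R] [IsDomain R] [CharZero R]
    {S : Equiv.Perm (Fin n) → MvPolynomial (Fin n) R} (hS : IsSchubertFamily S)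
    (w : Equiv.Perm (Fin n)) :
    (↑(S w).support : Set (Fin n →₀ ℕ)) =
      {d : Fin n →₀ ℕ | ∃ C : Fin n → Finset (Fin n),
        (∀ j, DomLE (C j) (colSet (rothe w) j)) ∧
        ∀ i, d i = (Finset.univ.filter fun j => i ∈ C j).card} := by
  ext d
  rw [mem_coe, mem_support_iff, hS.coeff_ne_zero_iff]
  simp only [dominatedVectors, Set.mem_ofPred_eq, funext_iff, rowCount, eq_comm]

/-- The support of the Schubert polynomial `𝔖_w` equals `{ξ^C : C_j ≤ D(w)_j ∀ j}`,
where `ξ^C_i = #{j : i ∈ C_j}` and `D(w)_j` are the columns of the Rothe diagram. -/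
theorem stmt11 (n : ℕ) (Schub : Equiv.Perm (Fin n) → MvPolynomial (Fin n) ℤ)
    -- `𝔖_{w₀} = x_1^{n-1} x_2^{n-2} ⋯ x_{n-1}` for the longest permutation `w₀`.
    (hbase : Schub Fin.revPerm = ∏ i : Fin n, X i ^ (n - 1 - (i : ℕ)))
    -- For adjacent positions `i, j = i+1` with `w(i) < w(j)`: `𝔖_w = ∂_i 𝔖_{w sᵢ}`, i.e.
    -- `(xᵢ - xⱼ) ⬝ 𝔖_w = 𝔖_{w sᵢ} - sᵢ ⬝ 𝔖_{w sᵢ}`.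
    (hrec : ∀ (w : Equiv.Perm (Fin n)) (i j : Fin n), (i : ℕ) + 1 = (j : ℕ) → w i < w j →
      (X i - X j) * Schub w =
        Schub (w * Equiv.swap i j) -
          rename (Equiv.swap i j) (Schub (w * Equiv.swap i j)))
    (w : Equiv.Perm (Fin n)) :
    (↑(Schub w).support : Set (Fin n →₀ ℕ)) =
      {d : Fin n →₀ ℕ | ∃ C : Fin n → Finset (Fin n),
        (∀ j, DomLE (C j) (colSet (rothe w) j)) ∧
        ∀ i, d i = (Finset.univ.filter fun j => i ∈ C j).card} :=
  stmt11_general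
    ⟨hbase, fun w i j hij => hrec w i j (Nat.covBy_iff_add_one_eq.mp (Fin.covBy_iff.mp hij))⟩ w
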